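/- arXiv:2003.05577 — 2 statements merged into one kernel-verified Lean document; each statement's English description precedes it below -/
import Mathlib

section
/- Let d ≥ 1 be an odd integer and let k0,k1,k2,k3 be nonzero elements of F with k0^2 = q^{-d-1}. Let N be the subspace of M(k0,k1,k2,k3) spanned by {m_i : i ≥ d+1}. Then N is invariant under the four operators of M(k0,k1,k2,k3) and equals the smallest invariant subspace containing m_{d+1}; moreover, there exists a unique isomorphism of representations of H_q from the quotient representation M(k0,k1,k2,k3)/N onto E(k0,k1,k2,k3) sending m_i + N to v_i for all 0 ≤ i ≤ d. -/
/-!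
The subspace `N` is the kernel of the truncation map `trunc : M → F^(d+1)`, which keeps the
coordinates `0, …, d` and therefore sends `m_j` to `v_j` for `j ≤ d` and to `0` for `j > d`.

The condition `k₀² = q^{-d-1}` enters twice: it kills the coefficients `1 - k₀² q^{d+1}` through
which `T₀` and `T₁` could map `m_{d+1}` out of `N` (`Nsub_invariant`), and it identifies
`k₀⁻¹ q^{-d-1}` with `k₀`, so that `trunc` intertwines the action on `M` with that on `E` also at
the last vector `v_d` (`trunc_intertwines_mv`). The isomorphism is then the one induced by the
surjection `trunc` on `M / ker trunc`; it is unique because the classes of the `m_j` span the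
quotient. That `m_{d+1}` generates `N` follows from `T₂` and `T₀` sending `m_j` to nonzero
multiples of `m_j - m_{j+1}` for `j` even and odd respectively (`Nsub_le_of_mem`).
-/

universe u

namespace DAHA

variable {F : Type*} [Field F]

/-- A representation of the universal DAHA `H_q` of type `(C₁∨, C₁)` on `V`:
a quadruple of invertible operators (indexed by `ZMod 4`) such that each
`Tᵢ + Tᵢ⁻¹` commutes with every `Tⱼ` and `T₀ T₁ T₂ T₃ = q⁻¹ • id`. -/
def IsRep {V : Type*} [AddCommGroup V] [Module F V] (q : F)
    (T : ZMod 4 → Module.End F V) : Prop :=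
  (∀ i, IsUnit (T i)) ∧
  (∀ i j, Commute (T i + Ring.inverse (T i)) (T j)) ∧
  (T 0 * T 1 * T 2 * T 3 = q⁻¹ • (1 : Module.End F V))

/-- Irreducibility: `V ≠ 0` and the only invariant subspaces are `⊥` and `⊤`. -/
def Irred {V : Type*} [AddCommGroup V] [Module F V]
    (T : ZMod 4 → Module.End F V) : Prop :=
  (∃ v : V, v ≠ 0) ∧
  ∀ W : Submodule F V, (∀ i, ∀ w ∈ W, T i w ∈ W) → W = ⊥ ∨ W = ⊤

/-- Isomorphism of two operator quadruples. -/
def Iso {V : Type*} {V' : Type*} [AddCommGroup V] [Module F V]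
    [AddCommGroup V'] [Module F V']
    (T : ZMod 4 → Module.End F V) (T' : ZMod 4 → Module.End F V') : Prop :=
  ∃ S : V ≃ₗ[F] V', ∀ i v, S (T i v) = T' i (S v)

/-- The twist of an operator quadruple by `ε ∈ ℤ/4ℤ`. -/
def twist {V : Type*} [AddCommGroup V] [Module F V]
    (T : ZMod 4 → Module.End F V) (ε : ZMod 4) : ZMod 4 → Module.End F V :=
  fun i => T (i + ε)

/-- The standard basis vectors `v_i` of `Fin (d+1) → F`, extended by `0` beyond index `d`. -/
noncomputable def e (F : Type*) [Field F] (d i : ℕ) : Fin (d + 1) → F :=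
  if h : i < d + 1 then Pi.single (⟨i, h⟩ : Fin (d + 1)) (1 : F) else 0

/-- The basis vectors `m_i` of `ℕ →₀ F`. -/
noncomputable def mv (F : Type*) [Field F] (i : ℕ) : ℕ →₀ F := Finsupp.single i 1

/-- The defining action of the even-dimensional module `E(k₀,k₁,k₂,k₃)` (for `d` odd)
on the basis `v_0, …, v_d` of `Fin (d+1) → F`. -/
def IsE (q k0 k1 k2 k3 : F) (d : ℕ)
    (T : ZMod 4 → Module.End F (Fin (d + 1) → F)) : Prop :=
  (∀ i : ℕ, Even i → 2 ≤ i → i ≤ d - 1 →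
    T 0 (e F d i) = (k0⁻¹ * (q ^ i)⁻¹ * (1 - q ^ i) * (1 - k0 ^ 2 * q ^ i)) • e F d (i - 1)
      + (k0 + k0⁻¹ - k0⁻¹ * (q ^ i)⁻¹) • e F d i) ∧
  (∀ i : ℕ, Odd i → i ≤ d - 2 →
    T 0 (e F d i) = (k0⁻¹ * (q ^ (i + 1))⁻¹) • (e F d i - e F d (i + 1))) ∧
  (T 0 (e F d 0) = k0 • e F d 0) ∧
  (T 0 (e F d d) = k0 • e F d d) ∧
  (∀ i : ℕ, Even i → 2 ≤ i → i ≤ d - 1 →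
    T 1 (e F d i) = (-(k1 * (1 - q ^ i) * (1 - k0 ^ 2 * q ^ i))) • e F d (i - 1)
      + k1 • e F d i + k1⁻¹ • e F d (i + 1)) ∧
  (∀ i : ℕ, Odd i → i ≤ d → T 1 (e F d i) = k1⁻¹ • e F d i) ∧
  (T 1 (e F d 0) = k1 • e F d 0 + k1⁻¹ • e F d 1) ∧
  (∀ i : ℕ, Even i → i ≤ d - 1 →
    T 2 (e F d i) = (k0⁻¹ * k1⁻¹ * k3⁻¹ * (q ^ (i + 1))⁻¹) • (e F d i - e F d (i + 1))) ∧
  (∀ i : ℕ, Odd i → i ≤ d →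
    T 2 (e F d i) = ((k0 * k1 * k3 * q ^ i)⁻¹ * (k0 * k1 * k3 * q ^ i - k2)
        * (k0 * k1 * k3 * q ^ i - k2⁻¹)) • e F d (i - 1)
      + (k2 + k2⁻¹ - k0⁻¹ * k1⁻¹ * k3⁻¹ * (q ^ i)⁻¹) • e F d i) ∧
  (∀ i : ℕ, Even i → i ≤ d - 1 → T 3 (e F d i) = k3 • e F d i) ∧
  (∀ i : ℕ, Odd i → i ≤ d - 2 →
    T 3 (e F d i) = (-(k3⁻¹ * (k0 * k1 * k3 * q ^ i - k2)
        * (k0 * k1 * k3 * q ^ i - k2⁻¹))) • e F d (i - 1)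
      + k3⁻¹ • e F d i + k3 • e F d (i + 1)) ∧
  (T 3 (e F d d) = (-(k3⁻¹ * (k0 * k1 * k3 * q ^ d - k2)
        * (k0 * k1 * k3 * q ^ d - k2⁻¹))) • e F d (d - 1)
      + k3⁻¹ • e F d d)

/-- The defining action of the odd-dimensional module `O(k₀,k₁,k₂,k₃)` (for `d` even)
on the basis `v_0, …, v_d` of `Fin (d+1) → F`. -/
def IsO (q k0 k1 k2 k3 : F) (d : ℕ)
    (T : ZMod 4 → Module.End F (Fin (d + 1) → F)) : Prop :=
  (∀ i : ℕ, Even i → 2 ≤ i → i ≤ d →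
    T 0 (e F d i) = (k0⁻¹ * (q ^ i)⁻¹ * (1 - q ^ i) * (1 - k0 ^ 2 * q ^ i)) • e F d (i - 1)
      + (k0 + k0⁻¹ - k0⁻¹ * (q ^ i)⁻¹) • e F d i) ∧
  (∀ i : ℕ, Odd i → i ≤ d - 1 →
    T 0 (e F d i) = (k0⁻¹ * (q ^ (i + 1))⁻¹) • (e F d i - e F d (i + 1))) ∧
  (T 0 (e F d 0) = k0 • e F d 0) ∧
  (∀ i : ℕ, Even i → 2 ≤ i → i ≤ d - 2 →
    T 1 (e F d i) = (-(k1 * (1 - q ^ i) * (1 - k0 ^ 2 * q ^ i))) • e F d (i - 1)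
      + k1 • e F d i + k1⁻¹ • e F d (i + 1)) ∧
  (∀ i : ℕ, Odd i → i ≤ d - 1 → T 1 (e F d i) = k1⁻¹ • e F d i) ∧
  (T 1 (e F d 0) = k1 • e F d 0 + k1⁻¹ • e F d 1) ∧
  (T 1 (e F d d) = (-(k1 * (1 - q ^ d) * (1 - k0 ^ 2 * q ^ d))) • e F d (d - 1) + k1 • e F d d) ∧
  (∀ i : ℕ, Even i → i ≤ d - 2 →
    T 2 (e F d i) = (k2 * q ^ (d - i)) • (e F d i - e F d (i + 1))) ∧
  (∀ i : ℕ, Odd i → i ≤ d - 1 →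
    T 2 (e F d i) = (-(k2 * (1 - (k2 ^ 2)⁻¹ * (q ^ (d + 1 - i))⁻¹) * (1 - q ^ (d - i + 1)))) • e F d (i - 1)
      + (k2 + k2⁻¹ - k2 * q ^ (d - i + 1)) • e F d i) ∧
  (T 2 (e F d d) = k2 • e F d d) ∧
  (∀ i : ℕ, Even i → i ≤ d → T 3 (e F d i) = k3 • e F d i) ∧
  (∀ i : ℕ, Odd i → i ≤ d - 1 →
    T 3 (e F d i) = (-(k3⁻¹ * (1 - (k2 ^ 2)⁻¹ * (q ^ (d + 1 - i))⁻¹)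
        * (1 - (q ^ (d + 1 - i))⁻¹))) • e F d (i - 1)
      + k3⁻¹ • e F d i + k3 • e F d (i + 1))

/-- The defining action of the infinite-dimensional module `M(k₀,k₁,k₂,k₃)`
on the basis `m_0, m_1, …` of `ℕ →₀ F`. -/
def IsM (q k0 k1 k2 k3 : F) (T : ZMod 4 → Module.End F (ℕ →₀ F)) : Prop :=
  (∀ i : ℕ, Even i → 2 ≤ i →
    T 0 (mv F i) = (k0⁻¹ * (q ^ i)⁻¹ * (1 - q ^ i) * (1 - k0 ^ 2 * q ^ i)) • mv F (i - 1)
      + (k0 + k0⁻¹ - k0⁻¹ * (q ^ i)⁻¹) • mv F i) ∧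
  (∀ i : ℕ, Odd i →
    T 0 (mv F i) = (k0⁻¹ * (q ^ (i + 1))⁻¹) • (mv F i - mv F (i + 1))) ∧
  (T 0 (mv F 0) = k0 • mv F 0) ∧
  (∀ i : ℕ, Even i → 2 ≤ i →
    T 1 (mv F i) = (-(k1 * (1 - q ^ i) * (1 - k0 ^ 2 * q ^ i))) • mv F (i - 1)
      + k1 • mv F i + k1⁻¹ • mv F (i + 1)) ∧
  (∀ i : ℕ, Odd i → T 1 (mv F i) = k1⁻¹ • mv F i) ∧
  (T 1 (mv F 0) = k1 • mv F 0 + k1⁻¹ • mv F 1) ∧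
  (∀ i : ℕ, Even i →
    T 2 (mv F i) = (k0⁻¹ * k1⁻¹ * k3⁻¹ * (q ^ (i + 1))⁻¹) • (mv F i - mv F (i + 1))) ∧
  (∀ i : ℕ, Odd i →
    T 2 (mv F i) = ((k0 * k1 * k3 * q ^ i)⁻¹ * (k0 * k1 * k3 * q ^ i - k2)
        * (k0 * k1 * k3 * q ^ i - k2⁻¹)) • mv F (i - 1)
      + (k2 + k2⁻¹ - k0⁻¹ * k1⁻¹ * k3⁻¹ * (q ^ i)⁻¹) • mv F i) ∧
  (∀ i : ℕ, Even i → T 3 (mv F i) = k3 • mv F i) ∧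
  (∀ i : ℕ, Odd i →
    T 3 (mv F i) = (-(k3⁻¹ * (k0 * k1 * k3 * q ^ i - k2)
        * (k0 * k1 * k3 * q ^ i - k2⁻¹))) • mv F (i - 1)
      + k3⁻¹ • mv F i + k3 • mv F (i + 1))


/-- The subspace of `M(k₀,k₁,k₂,k₃)` spanned by `{m_i : i ≥ d+1}`. -/
noncomputable def Nsub (F : Type*) [Field F] (d : ℕ) : Submodule F (ℕ →₀ F) :=
  Submodule.span F {x : ℕ →₀ F | ∃ j : ℕ, d + 1 ≤ j ∧ x = mv F j}

/-! ### The subspace `N` and the truncation map -/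

/-- The projection `M → F^(d+1)` keeping the first `d + 1` coordinates. Its kernel is `N`, and it
sends `m_j` to `v_j`, where `v_j = 0` for `j > d`. -/
noncomputable def trunc (F : Type*) [Field F] (d : ℕ) : (ℕ →₀ F) →ₗ[F] (Fin (d + 1) → F) :=
  LinearMap.pi fun k => Finsupp.lapply (k : ℕ)

lemma trunc_mv (d j : ℕ) : trunc F d (mv F j) = e F d j := by
  ext k
  unfold trunc mv e
  split_ifs with h
  · by_cases hk : j = k
    · subst hk; simp
    · have : k ≠ ⟨j, h⟩ := fun h' => hk (by rw [h'])
      simp [hk, this]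
  · have hk : j ≠ k := by have := k.2; omega
    simp [hk]

lemma e_of_lt {d j : ℕ} (h : d < j) : e F d j = 0 := by
  unfold e
  rw [dif_neg (by omega)]

lemma mv_mem_Nsub {d j : ℕ} (h : d + 1 ≤ j) : mv F j ∈ Nsub F d :=
  Submodule.subset_span ⟨j, h, rfl⟩

lemma ker_trunc (d : ℕ) : LinearMap.ker (trunc F d) = Nsub F d := by
  apply le_antisymm
  · intro x hx
    rw [← Finsupp.sum_single x]
    refine Submodule.sum_mem _ fun j hj => ?_
    have hdj : d + 1 ≤ j := by
      by_contra hlt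
      exact Finsupp.mem_support_iff.1 hj
        (congrFun (LinearMap.mem_ker.1 hx) (⟨j, by omega⟩ : Fin (d + 1)))
    have h1 : Finsupp.single j (x j) = x j • mv F j := by simp [mv]
    rw [h1]
    exact Submodule.smul_mem _ _ (mv_mem_Nsub hdj)
  · rw [Nsub, Submodule.span_le]
    rintro _ ⟨j, hj, rfl⟩
    rw [SetLike.mem_coe, LinearMap.mem_ker, trunc_mv, e_of_lt (by omega)]

lemma trunc_surjective (d : ℕ) : Function.Surjective (trunc F d) := by
  rw [← LinearMap.range_eq_top, eq_top_iff, ← (Pi.basisFun F (Fin (d + 1))).span_eq,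
    Submodule.span_le]
  rintro _ ⟨k, rfl⟩
  refine ⟨mv F k, ?_⟩
  rw [trunc_mv, e, dif_pos k.2, Pi.basisFun_apply]

/-! ### Invariance, generation and intertwining -/

/-- The only coefficients that could carry `N` down to `m_d` are those of `m_d` in `T₀ m_{d+1}`
and `T₁ m_{d+1}`; both contain the factor `1 - k₀² q^{d+1} = 0`. -/
lemma Nsub_invariant {q : F} (hq : q ≠ 0) {d : ℕ} (hodd : Odd d) {k0 k1 k2 k3 : F}
    (hpar : k0 ^ 2 = (q ^ (d + 1))⁻¹)
    {M : ZMod 4 → Module.End F (ℕ →₀ F)} (hM : IsM q k0 k1 k2 k3 M) (i : ZMod 4) :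
    Nsub F d ≤ (Nsub F d).comap (M i) := by
  obtain ⟨h0e, h0o, -, h1e, h1o, -, h2e, h2o, h3e, h3o⟩ := hM
  have hz : 1 - k0 ^ 2 * q ^ (d + 1) = 0 := by
    rw [hpar, inv_mul_cancel₀ (pow_ne_zero _ hq), sub_self]
  rw [Nsub, Submodule.span_le]
  rintro _ ⟨j, hj, rfl⟩
  rw [← Nsub, SetLike.mem_coe, Submodule.mem_comap]
  have hj0 : mv F j ∈ Nsub F d := mv_mem_Nsub hj
  have hj1 : mv F (j + 1) ∈ Nsub F d := mv_mem_Nsub (by omega)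
  have hlow : ∀ c : F, (c * (1 - k0 ^ 2 * q ^ j)) • mv F (j - 1) ∈ Nsub F d := by
    intro c
    rcases hj.eq_or_lt with rfl | hlt
    · rw [hz, mul_zero, zero_smul]; exact zero_mem _
    · exact Submodule.smul_mem _ _ (mv_mem_Nsub (by omega))
  rcases Nat.even_or_odd j with hev | hod
  · have h2 : 2 ≤ j := by have := hodd.pos; omega
    fin_cases i
    · change M 0 _ ∈ _
      rw [h0e j hev h2]
      exact add_mem (hlow _) (Submodule.smul_mem _ _ hj0)
    · change M 1 _ ∈ _
      rw [h1e j hev h2, ← neg_mul]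
      exact add_mem (add_mem (hlow _) (Submodule.smul_mem _ _ hj0)) (Submodule.smul_mem _ _ hj1)
    · change M 2 _ ∈ _
      rw [h2e j hev]
      exact Submodule.smul_mem _ _ (sub_mem hj0 hj1)
    · change M 3 _ ∈ _
      rw [h3e j hev]
      exact Submodule.smul_mem _ _ hj0
  · -- `j` is odd and `d + 1` is even, so `j ≠ d + 1` and `m_{j-1}` still lies in `N`.
    have hjm : mv F (j - 1) ∈ Nsub F d := by
      refine mv_mem_Nsub ?_
      obtain ⟨a, rfl⟩ := hodd
      obtain ⟨b, rfl⟩ := hod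
      omega
    fin_cases i
    · change M 0 _ ∈ _
      rw [h0o j hod]
      exact Submodule.smul_mem _ _ (sub_mem hj0 hj1)
    · change M 1 _ ∈ _
      rw [h1o j hod]
      exact Submodule.smul_mem _ _ hj0
    · change M 2 _ ∈ _
      rw [h2o j hod]
      exact add_mem (Submodule.smul_mem _ _ hjm) (Submodule.smul_mem _ _ hj0)
    · change M 3 _ ∈ _
      rw [h3o j hod]
      exact add_mem (add_mem (Submodule.smul_mem _ _ hjm) (Submodule.smul_mem _ _ hj0))
        (Submodule.smul_mem _ _ hj1)

/-- From `m_j` one reaches `m_{j+1}` by `T₂` (`j` even) or `T₀` (`j` odd), both of which send `m_j`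
to a nonzero multiple of `m_j - m_{j+1}`. -/
lemma Nsub_le_of_mem {q : F} (hq : q ≠ 0) {d : ℕ} {k0 k1 k2 k3 : F}
    (hk0 : k0 ≠ 0) (hk1 : k1 ≠ 0) (hk3 : k3 ≠ 0)
    {M : ZMod 4 → Module.End F (ℕ →₀ F)} (hM : IsM q k0 k1 k2 k3 M)
    {W : Submodule F (ℕ →₀ F)} (hd : mv F (d + 1) ∈ W) (hW : ∀ i, W ≤ W.comap (M i)) :
    Nsub F d ≤ W := by
  obtain ⟨-, h0o, -, -, -, -, h2e, -, -, -⟩ := hM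
  rw [Nsub, Submodule.span_le]
  rintro _ ⟨j, hj, rfl⟩
  rw [SetLike.mem_coe]
  induction j, hj using Nat.le_induction with
  | base => exact hd
  | succ j hj ih =>
    suffices h : mv F j - mv F (j + 1) ∈ W by
      have := sub_mem ih h
      rwa [sub_sub_cancel] at this
    rcases Nat.even_or_odd j with hev | hod
    · have := hW 2 ih
      rw [Submodule.mem_comap, h2e j hev] at this
      exact (Submodule.smul_mem_iff _ (by simp [hk0, hk1, hk3, hq])).1 this
    · have := hW 0 ih
      rw [Submodule.mem_comap, h0o j hod] at this
      exact (Submodule.smul_mem_iff _ (by simp [hk0, hq])).1 this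

/-- The formulas for `M` and `E` agree term by term below `d`; at `j = d` the term in `m_{d+1}` is
truncated away, and `k₀⁻¹ q^{-d-1} = k₀` matches the eigenvalue of `T₀` on `v_d`. -/
lemma trunc_intertwines_mv {q : F} {d : ℕ} (hodd : Odd d)
    {k0 k1 k2 k3 : F} (hk0 : k0 ≠ 0) (hpar : k0 ^ 2 = (q ^ (d + 1))⁻¹)
    {M : ZMod 4 → Module.End F (ℕ →₀ F)} (hM : IsM q k0 k1 k2 k3 M)
    {T : ZMod 4 → Module.End F (Fin (d + 1) → F)} (hT : IsE q k0 k1 k2 k3 d T)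
    (i : ZMod 4) {j : ℕ} (hj : j ≤ d) :
    trunc F d (M i (mv F j)) = T i (e F d j) := by
  obtain ⟨h0e, h0o, h00, h1e, h1o, h10, h2e, h2o, h3e, h3o⟩ := hM
  obtain ⟨t0e, t0o, t00, t0d, t1e, t1o, t10, t2e, t2o, t3e, t3o, t3d⟩ := hT
  have hlast : e F d (d + 1) = 0 := e_of_lt (by omega)
  rcases Nat.even_or_odd j with hev | hod
  · have hjd : j ≤ d - 1 := by
      obtain ⟨a, rfl⟩ := hodd
      obtain ⟨b, rfl⟩ := hev
      omega
    have hj2 : j = 0 ∨ 2 ≤ j := by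
      obtain ⟨b, rfl⟩ := hev
      omega
    fin_cases i
    · change trunc F d (M 0 _) = T 0 _
      rcases hj2 with rfl | h2
      · simp only [h00, t00, map_smul, trunc_mv]
      · simp only [h0e j hev h2, t0e j hev h2 hjd, map_smul, map_add, trunc_mv]
    · change trunc F d (M 1 _) = T 1 _
      rcases hj2 with rfl | h2
      · simp only [h10, t10, map_smul, map_add, trunc_mv]
      · simp only [h1e j hev h2, t1e j hev h2 hjd, map_smul, map_add, trunc_mv]
    · change trunc F d (M 2 _) = T 2 _
      simp only [h2e j hev, t2e j hev hjd, map_smul, map_sub, trunc_mv]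
    · change trunc F d (M 3 _) = T 3 _
      simp only [h3e j hev, t3e j hev hjd, map_smul, trunc_mv]
  · have hjd : j = d ∨ j ≤ d - 2 := by
      obtain ⟨a, rfl⟩ := hodd
      obtain ⟨b, rfl⟩ := hod
      omega
    fin_cases i
    · change trunc F d (M 0 _) = T 0 _
      rcases hjd with rfl | hlt
      · have hc : k0⁻¹ * (q ^ (j + 1))⁻¹ = k0 := by
          rw [← hpar, pow_two, inv_mul_cancel_left₀ hk0]
        simp only [h0o j hod, t0d, map_smul, map_sub, trunc_mv, hlast, sub_zero, hc]
      · simp only [h0o j hod, t0o j hod hlt, map_smul, map_sub, trunc_mv]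
    · change trunc F d (M 1 _) = T 1 _
      simp only [h1o j hod, t1o j hod hj, map_smul, trunc_mv]
    · change trunc F d (M 2 _) = T 2 _
      simp only [h2o j hod, t2o j hod hj, map_smul, map_add, trunc_mv]
    · change trunc F d (M 3 _) = T 3 _
      rcases hjd with rfl | hlt
      · simp only [h3o j hod, t3d, map_smul, map_add, trunc_mv, hlast, smul_zero, add_zero]
      · simp only [h3o j hod, t3o j hod hlt, map_smul, map_add, trunc_mv]

/-- `N = span{m_i : i ≥ d+1}` is invariant, is the smallest invariant
subspace containing `m_{d+1}`, and `M(k₀,k₁,k₂,k₃)/N ≅ E(k₀,k₁,k₂,k₃)` via a unique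
isomorphism sending `m_i + N` to `v_i` for `0 ≤ i ≤ d`. -/
theorem statement11 (q : F) (hq : q ≠ 0) (d : ℕ) (hd : 1 ≤ d) (hodd : Odd d)
    (k0 k1 k2 k3 : F) (hk0 : k0 ≠ 0) (hk1 : k1 ≠ 0) (hk2 : k2 ≠ 0) (hk3 : k3 ≠ 0)
    (hpar : k0 ^ 2 = (q ^ (d + 1))⁻¹)
    (M : ZMod 4 → Module.End F (ℕ →₀ F)) (hM : IsM q k0 k1 k2 k3 M)
    (T : ZMod 4 → Module.End F (Fin (d + 1) → F)) (hT : IsE q k0 k1 k2 k3 d T) :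
    ∃ hN : ∀ i, Nsub F d ≤ (Nsub F d).comap (M i),
      (Nsub F d =
        sInf {W : Submodule F (ℕ →₀ F) | mv F (d + 1) ∈ W ∧ ∀ i, W ≤ W.comap (M i)}) ∧
      ∃! S : ((ℕ →₀ F) ⧸ Nsub F d) ≃ₗ[F] (Fin (d + 1) → F),
        (∀ i x, S (Submodule.mapQ (Nsub F d) (Nsub F d) (M i) (hN i) x) = T i (S x)) ∧
        (∀ j : ℕ, j ≤ d → S (Submodule.Quotient.mk (mv F j)) = e F d j) := by
  have hN := Nsub_invariant hq hodd hpar hM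
  have hker : ∀ {x}, x ∈ Nsub F d → trunc F d x = 0 := fun {x} hx => by
    rwa [← ker_trunc, LinearMap.mem_ker] at hx
  have hint : ∀ i, trunc F d ∘ₗ M i = T i ∘ₗ trunc F d := by
    intro i
    refine Finsupp.lhom_ext' fun j => LinearMap.ext_ring ?_
    change trunc F d (M i (mv F j)) = T i (trunc F d (mv F j))
    rcases le_or_gt j d with hj | hj
    · rw [trunc_mv, trunc_intertwines_mv hodd hk0 hpar hM hT i hj]
    · have hm : mv F j ∈ Nsub F d := mv_mem_Nsub hj
      rw [hker hm, map_zero, hker (hN i hm)]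
  let S : ((ℕ →₀ F) ⧸ Nsub F d) ≃ₗ[F] (Fin (d + 1) → F) :=
    (Submodule.quotEquivOfEq _ _ (ker_trunc d).symm).trans
      ((trunc F d).quotKerEquivOfSurjective (trunc_surjective d))
  have hS : ∀ x, S (Submodule.Quotient.mk x) = trunc F d x := fun _ => rfl
  refine ⟨hN, le_antisymm (le_sInf fun W hW => Nsub_le_of_mem hq hk0 hk1 hk3 hM hW.1 hW.2)
    (sInf_le ⟨mv_mem_Nsub le_rfl, hN⟩), S, ⟨?_, ?_⟩, ?_⟩
  · intro i x
    obtain ⟨x, rfl⟩ := Submodule.Quotient.mk_surjective _ x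
    rw [Submodule.mapQ_apply, hS, hS]
    exact LinearMap.congr_fun (hint i) x
  · intro j _
    rw [hS, trunc_mv]
  · rintro R ⟨-, hR⟩
    -- The images of `m_0, …, m_d` are prescribed, and those of the other `m_j` vanish.
    apply LinearEquiv.toLinearMap_injective
    refine Submodule.linearMap_qext _ (Finsupp.lhom_ext' fun j => LinearMap.ext_ring ?_)
    change R (Submodule.Quotient.mk (mv F j)) = S (Submodule.Quotient.mk (mv F j))
    rcases le_or_gt j d with hj | hj
    · rw [hR j hj, hS, trunc_mv]
    · rw [(Submodule.Quotient.mk_eq_zero _).2 (mv_mem_Nsub hj), map_zero, map_zero]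

end DAHA
end

section
/- Let d ≥ 1 be an odd integer and let k0,k1,k2,k3 be nonzero elements of F with k0^2 = q^{-d-1}. Then the representation E(k0,k1,k2,k3) of H_q is isomorphic to E(k0,k1^{-1},k2,k3) (without any irreducibility hypothesis). Moreover, setting X = T3 T0 and Y = T0 T1 on E(k0,k1,k2,k3), and defining vectors w_0 = v_0 and w_{i+1} = (1 - k0 k1^{-1} q^{2⌈i/2⌉} Y^{(-1)^{i-1}}) w_i for 0 ≤ i ≤ d-1, the vectors w_0,…,w_d form an F-basis of E(k0,k1,k2,k3) and satisfy: (1 - k0 k3 q^{2⌈i/2⌉} X^{(-1)^{i-1}}) w_i = 0 if i = 0 and = φ_i w_{i-1} for 1 ≤ i ≤ d; and (1 - k0 k1^{-1} q^{2⌈i/2⌉} Y^{(-1)^{i-1}}) w_i = 0 if i = d and = w_{i+1} for 0 ≤ i ≤ d-1; here φ_i = (1-q^i)(1-k0^2 q^i) if i is even and φ_i = (k0 k1^{-1} k3 q^i - k2)(k0 k1^{-1} k3 q^i - k2^{-1}) if i is odd. -/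
/-!
Write `Y = T₀ T₁`. On `E(k₀,k₁,k₂,k₃)` the vector `v_0` is a joint eigenvector of `T₀` and `T₃`
(eigenvalues `k₀`, `k₃`), the elements `Tᵢ + Tᵢ⁻¹` act as the scalars `kᵢ + kᵢ⁻¹`, and every `v_i`
is obtained from `v_0` by applying alternately `1 - k₀ k₁ q^{2m} Y⁻¹` and `1 - k₀ k₁ q^{2m+2} Y`
(`IsChain.heckeRel`, `IsChain.yChain`); in particular `v_0` is cyclic for `Y`.

The relations of `H_q` let one move `T₀` and `T₃` past `Y^{±1}`, with structure constants depending
on `k₁` only through `k₁ + k₁⁻¹`. Hence a linear map commuting with `Y` that matches the two vectors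
`v_0` commutes with all `Tᵢ` (`HeckeRel.intertwine`). It remains to see that `v_0` has the same
annihilator in `F[Y^{±1}]` on both modules. The annihilator is generated by
`∏_{j<n} (1 - k₀ k₁ q^{2j} Y⁻¹)(1 - k₀ k₁ q^{2j+2} Y)` with `2n = d + 1`, and since `k₀² q^{2n} = 1`
this is, up to a unit, `∏_{j<n} (Y - k₀ k₁ q^{2j})(Y - k₀ k₁⁻¹ q^{2j})`, which is symmetric under
`k₁ ↔ k₁⁻¹` (`YChain.prod_eq`). In terms of vectors this says `w_{d+1} = 0`, so the map
`R : E(k₀,k₁⁻¹,k₂,k₃) → E(k₀,k₁,k₂,k₃)`, `v_i ↦ w_i`, commutes with `Y` and therefore with the whole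
action (`exists_intertwiner`). The analogous map in the other direction is its inverse
(`comp_eq_id`). The `w_i` are thus the image of the standard basis of `E(k₀,k₁⁻¹,k₂,k₃)`, and their
`X`-relations are the images of the relations computed there (`IsChain.x_apply`).
-/

universe u

namespace DAHA

variable {F : Type*} [Field F]

/-- The vectors `w_i` of Proposition 5.7: `w_0 = v_0` and
`w_{i+1} = (1 - k₀ k₁⁻¹ q^{2⌈i/2⌉} Y^{(-1)^{i-1}}) w_i`, where `Y = T₀ T₁`. -/
noncomputable def wvec (q k0 k1 : F) (d : ℕ)
    (T : ZMod 4 → Module.End F (Fin (d + 1) → F)) : ℕ → (Fin (d + 1) → F)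
  | 0 => e F d 0
  | i + 1 =>
      ((1 : Module.End F (Fin (d + 1) → F)) -
        (k0 * k1⁻¹ * q ^ (2 * ((i + 1) / 2))) •
          (if Even i then Ring.inverse (T 0 * T 1) else T 0 * T 1))
        (wvec q k0 k1 d T i)

/-! ### The relations of the module on a spanning sequence -/

/-- The operators `T` act on the sequence `v` by the formulas defining `E(k₀,k₁,k₂,k₃)`, for every
index and without any boundary case, and `v` spans `V`. For `E` itself `v` is the standard basis
followed by zeros: the coefficients that would couple `v_0` to `v_{-1}`, or `v_{d+1}` to `v_d`,
vanish. -/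
structure IsChain {V : Type*} [AddCommGroup V] [Module F V] (q k0 k1 k2 k3 : F)
    (T : ZMod 4 → Module.End F V) (v : ℕ → V) : Prop where
  span : Submodule.span F (Set.range v) = ⊤
  t0_zero : T 0 (v 0) = k0 • v 0
  t0_even : ∀ m : ℕ, T 0 (v (2 * m + 2)) =
    (k0⁻¹ * (q ^ (2 * m + 2))⁻¹ * (1 - q ^ (2 * m + 2)) * (1 - k0 ^ 2 * q ^ (2 * m + 2))) •
      v (2 * m + 1) + (k0 + k0⁻¹ - k0⁻¹ * (q ^ (2 * m + 2))⁻¹) • v (2 * m + 2)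
  t0_odd : ∀ m : ℕ, T 0 (v (2 * m + 1)) =
    (k0⁻¹ * (q ^ (2 * m + 2))⁻¹) • (v (2 * m + 1) - v (2 * m + 2))
  t1_zero : T 1 (v 0) = k1 • v 0 + k1⁻¹ • v 1
  t1_even : ∀ m : ℕ, T 1 (v (2 * m + 2)) =
    (-(k1 * (1 - q ^ (2 * m + 2)) * (1 - k0 ^ 2 * q ^ (2 * m + 2)))) • v (2 * m + 1)
      + k1 • v (2 * m + 2) + k1⁻¹ • v (2 * m + 3)
  t1_odd : ∀ m : ℕ, T 1 (v (2 * m + 1)) = k1⁻¹ • v (2 * m + 1)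
  t2_even : ∀ m : ℕ, T 2 (v (2 * m)) =
    (k0⁻¹ * k1⁻¹ * k3⁻¹ * (q ^ (2 * m + 1))⁻¹) • (v (2 * m) - v (2 * m + 1))
  t2_odd : ∀ m : ℕ, T 2 (v (2 * m + 1)) =
    ((k0 * k1 * k3 * q ^ (2 * m + 1))⁻¹ * (k0 * k1 * k3 * q ^ (2 * m + 1) - k2)
        * (k0 * k1 * k3 * q ^ (2 * m + 1) - k2⁻¹)) • v (2 * m)
      + (k2 + k2⁻¹ - k0⁻¹ * k1⁻¹ * k3⁻¹ * (q ^ (2 * m + 1))⁻¹) • v (2 * m + 1)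
  t3_even : ∀ m : ℕ, T 3 (v (2 * m)) = k3 • v (2 * m)
  t3_odd : ∀ m : ℕ, T 3 (v (2 * m + 1)) =
    (-(k3⁻¹ * (k0 * k1 * k3 * q ^ (2 * m + 1) - k2)
        * (k0 * k1 * k3 * q ^ (2 * m + 1) - k2⁻¹))) • v (2 * m)
      + k3⁻¹ • v (2 * m + 1) + k3 • v (2 * m + 2)

theorem e_eq_zero (d i : ℕ) (h : d < i) : e F d i = 0 := by
  unfold e
  rw [dif_neg (by omega)]

theorem e_eq_single (d : ℕ) (i : Fin (d + 1)) : e F d i = Pi.single i (1 : F) := by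
  unfold e
  rw [dif_pos i.isLt]

theorem span_e (d : ℕ) : Submodule.span F (Set.range (e F d)) = ⊤ := by
  rw [eq_top_iff, ← (Pi.basisFun F (Fin (d + 1))).span_eq, Submodule.span_le]
  rintro _ ⟨i, rfl⟩
  refine Submodule.subset_span ⟨i, ?_⟩
  rw [e_eq_single, Pi.basisFun_apply]

/-- The case distinctions at the ends of the basis in the definition of `E` are instances of the
general formulas, because `1 - q ^ 0 = 0` and `1 - k₀² q^{d+1} = 0`. -/
theorem IsE.isChain {q k0 k1 k2 k3 : F} {d : ℕ} {T : ZMod 4 → Module.End F (Fin (d + 1) → F)}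
    (hq : q ≠ 0) (hodd : Odd d) (hk0 : k0 ≠ 0) (hpar : k0 ^ 2 = (q ^ (d + 1))⁻¹)
    (h : IsE q k0 k1 k2 k3 d T) : IsChain q k0 k1 k2 k3 T (e F d) := by
  obtain ⟨h0e, h0o, h00, h0d, h1e, h1o, h10, h2e, h2o, h3e, h3o, h3d⟩ := h
  obtain ⟨n, hn⟩ := hodd
  have hpar1 : 1 - k0 ^ 2 * q ^ (d + 1) = 0 := by
    rw [hpar, inv_mul_cancel₀ (pow_ne_zero _ hq), sub_self]
  have ev : ∀ m : ℕ, Even (2 * m) := fun m => even_two_mul m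
  have ev2 : ∀ m : ℕ, Even (2 * m + 2) := fun m => ⟨m + 1, by ring⟩
  have od : ∀ m : ℕ, Odd (2 * m + 1) := fun m => ⟨m, rfl⟩
  refine ⟨span_e d, h00, fun m => ?_, fun m => ?_, h10, fun m => ?_, fun m => ?_, fun m => ?_,
    fun m => ?_, fun m => ?_, fun m => ?_⟩
  · rcases lt_trichotomy m n with hm | rfl | hm
    · exact h0e _ (ev2 m) (by omega) (by omega)
    · rw [e_eq_zero d (2 * m + 2) (by omega), show 2 * m + 2 = d + 1 by omega, hpar1]; simp
    · rw [e_eq_zero d (2 * m + 2) (by omega), e_eq_zero d (2 * m + 1) (by omega)]; simp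
  · rcases lt_trichotomy m n with hm | rfl | hm
    · exact h0o _ (od m) (by omega)
    · rw [e_eq_zero d (2 * m + 2) (by omega), ← hn, h0d, sub_zero,
        show 2 * m + 2 = d + 1 by omega, ← hpar]
      congr 1
      field_simp
    · rw [e_eq_zero d (2 * m + 2) (by omega), e_eq_zero d (2 * m + 1) (by omega)]; simp
  · rcases lt_trichotomy m n with hm | rfl | hm
    · exact h1e _ (ev2 m) (by omega) (by omega)
    · rw [e_eq_zero d (2 * m + 2) (by omega), e_eq_zero d (2 * m + 3) (by omega),
        show 2 * m + 2 = d + 1 by omega, hpar1]; simp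
    · rw [e_eq_zero d (2 * m + 2) (by omega), e_eq_zero d (2 * m + 1) (by omega),
        e_eq_zero d (2 * m + 3) (by omega)]; simp
  · rcases le_or_gt m n with hm | hm
    · exact h1o _ (od m) (by omega)
    · rw [e_eq_zero d (2 * m + 1) (by omega)]; simp
  · rcases le_or_gt m n with hm | hm
    · exact h2e _ (ev m) (by omega)
    · rw [e_eq_zero d (2 * m) (by omega), e_eq_zero d (2 * m + 1) (by omega)]; simp
  · rcases le_or_gt m n with hm | hm
    · exact h2o _ (od m) (by omega)
    · rw [e_eq_zero d (2 * m) (by omega), e_eq_zero d (2 * m + 1) (by omega)]; simp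
  · rcases le_or_gt m n with hm | hm
    · exact h3e _ (ev m) (by omega)
    · rw [e_eq_zero d (2 * m) (by omega)]; simp
  · rcases lt_trichotomy m n with hm | rfl | hm
    · exact h3o _ (od m) (by omega)
    · rw [e_eq_zero d (2 * m + 2) (by omega), ← hn, h3d, show d - 1 = 2 * m by omega]; simp
    · rw [e_eq_zero d (2 * m) (by omega), e_eq_zero d (2 * m + 1) (by omega),
        e_eq_zero d (2 * m + 2) (by omega)]; simp

namespace IsChain

variable {V : Type*} [AddCommGroup V] [Module F V] {q k0 k1 k2 k3 : F}
  {T : ZMod 4 → Module.End F V} {v : ℕ → V}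

theorem end_ext (h : IsChain q k0 k1 k2 k3 T v) {A B : Module.End F V}
    (h0 : A (v 0) = B (v 0)) (ho : ∀ m : ℕ, A (v (2 * m + 1)) = B (v (2 * m + 1)))
    (he : ∀ m : ℕ, A (v (2 * m + 2)) = B (v (2 * m + 2))) : A = B := by
  refine LinearMap.ext_on_range h.span fun i => ?_
  rcases Nat.even_or_odd' i with ⟨m, rfl | rfl⟩
  · rcases m with _ | m
    · exact h0
    · exact he m
  · exact ho m

theorem t2_even' (h : IsChain q k0 k1 k2 k3 T v) (m : ℕ) : T 2 (v (2 * m + 2)) =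
    (k0⁻¹ * k1⁻¹ * k3⁻¹ * (q ^ (2 * m + 3))⁻¹) • (v (2 * m + 2) - v (2 * m + 3)) :=
  h.t2_even (m + 1)

theorem t2_zero (h : IsChain q k0 k1 k2 k3 T v) : T 2 (v 0) =
    (k0⁻¹ * k1⁻¹ * k3⁻¹ * q⁻¹) • (v 0 - v 1) := by
  simpa using h.t2_even 0

theorem t2_odd' (h : IsChain q k0 k1 k2 k3 T v) (m : ℕ) : T 2 (v (2 * m + 3)) =
    ((k0 * k1 * k3 * q ^ (2 * m + 3))⁻¹ * (k0 * k1 * k3 * q ^ (2 * m + 3) - k2)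
        * (k0 * k1 * k3 * q ^ (2 * m + 3) - k2⁻¹)) • v (2 * m + 2)
      + (k2 + k2⁻¹ - k0⁻¹ * k1⁻¹ * k3⁻¹ * (q ^ (2 * m + 3))⁻¹) • v (2 * m + 3) :=
  h.t2_odd (m + 1)

theorem t3_even' (h : IsChain q k0 k1 k2 k3 T v) (m : ℕ) : T 3 (v (2 * m + 2)) =
    k3 • v (2 * m + 2) :=
  h.t3_even (m + 1)

theorem t3_zero (h : IsChain q k0 k1 k2 k3 T v) : T 3 (v 0) = k3 • v 0 :=
  h.t3_even 0

theorem t1_odd' (h : IsChain q k0 k1 k2 k3 T v) (m : ℕ) : T 1 (v (2 * m + 3)) =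
    k1⁻¹ • v (2 * m + 3) :=
  h.t1_odd (m + 1)

theorem t0_odd' (h : IsChain q k0 k1 k2 k3 T v) (m : ℕ) : T 0 (v (2 * m + 3)) =
    (k0⁻¹ * (q ^ (2 * m + 4))⁻¹) • (v (2 * m + 3) - v (2 * m + 4)) :=
  h.t0_odd (m + 1)

theorem hecke0 (h : IsChain q k0 k1 k2 k3 T v) (hq : q ≠ 0) (hk0 : k0 ≠ 0) :
    T 0 * T 0 = (k0 + k0⁻¹) • T 0 - 1 := by
  refine h.end_ext ?_ (fun m => ?_) (fun m => ?_) <;>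
  · simp only [Module.End.mul_apply, LinearMap.sub_apply, LinearMap.smul_apply,
      Module.End.one_apply, h.t0_zero, h.t0_even, h.t0_odd, map_add, map_sub, map_smul]
    match_scalars <;> field_simp <;> ring

theorem hecke1 (h : IsChain q k0 k1 k2 k3 T v) (hk1 : k1 ≠ 0) :
    T 1 * T 1 = (k1 + k1⁻¹) • T 1 - 1 := by
  have h1 := h.t1_odd 0
  simp only [mul_zero, zero_add] at h1
  refine h.end_ext ?_ (fun m => ?_) (fun m => ?_) <;>
  · simp only [Module.End.mul_apply, LinearMap.sub_apply, LinearMap.smul_apply,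
      Module.End.one_apply, h.t1_zero, h.t1_even, h.t1_odd, h.t1_odd', h1, map_add, map_smul]
    match_scalars <;> field_simp <;> ring

theorem hecke2 (h : IsChain q k0 k1 k2 k3 T v) (hq : q ≠ 0) (hk0 : k0 ≠ 0) (hk1 : k1 ≠ 0)
    (hk2 : k2 ≠ 0) (hk3 : k3 ≠ 0) :
    T 2 * T 2 = (k2 + k2⁻¹) • T 2 - 1 := by
  have h1 := h.t2_odd 0
  simp only [mul_zero, zero_add, pow_one] at h1
  refine h.end_ext ?_ (fun m => ?_) (fun m => ?_) <;>
  · simp only [Module.End.mul_apply, LinearMap.sub_apply, LinearMap.smul_apply,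
      Module.End.one_apply, h.t2_zero, h.t2_even, h.t2_even', h.t2_odd, h.t2_odd', h1, map_add,
      map_sub, map_smul]
    match_scalars <;> field_simp <;> ring

theorem hecke3 (h : IsChain q k0 k1 k2 k3 T v) (hk3 : k3 ≠ 0) :
    T 3 * T 3 = (k3 + k3⁻¹) • T 3 - 1 := by
  refine h.end_ext ?_ (fun m => ?_) (fun m => ?_) <;>
  · simp only [Module.End.mul_apply, LinearMap.sub_apply, LinearMap.smul_apply,
      Module.End.one_apply, h.t3_zero, h.t3_even, h.t3_even', h.t3_odd, map_add,
      map_smul]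
    match_scalars <;> field_simp <;> ring

/-- The action of `Y = T₀ T₁` on the odd part of the chain. -/
theorem y_odd (h : IsChain q k0 k1 k2 k3 T v) (m : ℕ) :
    T 0 (T 1 (v (2 * m + 1))) =
      (k0⁻¹ * k1⁻¹ * (q ^ (2 * m + 2))⁻¹) • (v (2 * m + 1) - v (2 * m + 2)) := by
  rw [h.t1_odd, map_smul, h.t0_odd, smul_smul]
  congr 1
  ring

theorem y_even (h : IsChain q k0 k1 k2 k3 T v) (hq : q ≠ 0) (hk0 : k0 ≠ 0) (m : ℕ) :
    T 0 (T 1 (v (2 * m) - v (2 * m + 1))) = (k0 * k1 * q ^ (2 * m)) • v (2 * m) := by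
  rcases m with _ | m
  · have h1 := h.t1_odd 0
    have h2 := h.t0_odd 0
    simp only [mul_zero, zero_add, pow_zero] at h1 h2 ⊢
    simp only [h.t0_zero, h.t1_zero, h1, h2, map_add, map_sub, map_smul]
    module
  · simp only [mul_add, mul_one, h.t0_even, h.t0_odd, h.t1_even, h.t1_odd', add_assoc,
      Nat.reduceAdd, map_add, map_sub, map_smul]
    match_scalars <;> field_simp <;> ring

theorem prod (h : IsChain q k0 k1 k2 k3 T v) (hq : q ≠ 0) (hk0 : k0 ≠ 0) (hk1 : k1 ≠ 0)
    (hk2 : k2 ≠ 0) (hk3 : k3 ≠ 0) :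
    T 0 * T 1 * T 2 * T 3 = q⁻¹ • (1 : Module.End F V) := by
  have heven : ∀ m : ℕ, T 0 (T 1 (T 2 (T 3 (v (2 * m))))) = q⁻¹ • v (2 * m) := by
    intro m
    simp only [h.t3_even, map_smul, h.t2_even, h.y_even hq hk0]
    match_scalars
    field_simp
    ring
  refine h.end_ext (heven 0) (fun m => ?_) (fun m => heven (m + 1))
  have e1 := h.y_even hq hk0 m
  have e2 := h.y_even hq hk0 (m + 1)
  have e3 := h.y_odd m
  simp only [map_sub, mul_add, mul_one, add_assoc, Nat.reduceAdd] at e1 e2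
  have e1' := sub_eq_iff_eq_add.1 e1
  have e2' := sub_eq_iff_eq_add.1 e2
  have e4 := h.y_odd (m + 1)
  simp only [mul_add, mul_one, add_assoc, Nat.reduceAdd] at e4
  simp only [Module.End.mul_apply, LinearMap.smul_apply, Module.End.one_apply, h.t3_odd,
    h.t2_even, h.t2_even', h.t2_odd, map_add, map_sub, map_smul, e1', e2', e3, e4]
  match_scalars <;> field_simp <;> ring

end IsChain

/-! ### Commutation relations between `Y` and the generators -/

/-- The defining relations of `H_q` with the central elements `Tᵢ + Tᵢ⁻¹` acting as scalars `cᵢ`.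
Through `cᵢ = kᵢ + kᵢ⁻¹` these relations do not distinguish `k₁` from `k₁⁻¹`. -/
structure HeckeRel {V : Type*} [AddCommGroup V] [Module F V] (q c0 c1 c2 c3 : F)
    (T : ZMod 4 → Module.End F V) : Prop where
  sq0 : T 0 * T 0 = c0 • T 0 - 1
  sq1 : T 1 * T 1 = c1 • T 1 - 1
  sq2 : T 2 * T 2 = c2 • T 2 - 1
  sq3 : T 3 * T 3 = c3 • T 3 - 1
  prod : T 0 * T 1 * T 2 * T 3 = q⁻¹ • (1 : Module.End F V)

theorem IsChain.heckeRel {V : Type*} [AddCommGroup V] [Module F V] {q k0 k1 k2 k3 : F}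
    {T : ZMod 4 → Module.End F V} {v : ℕ → V} (h : IsChain q k0 k1 k2 k3 T v) (hq : q ≠ 0)
    (hk0 : k0 ≠ 0) (hk1 : k1 ≠ 0) (hk2 : k2 ≠ 0) (hk3 : k3 ≠ 0) :
    HeckeRel q (k0 + k0⁻¹) (k1 + k1⁻¹) (k2 + k2⁻¹) (k3 + k3⁻¹) T :=
  ⟨h.hecke0 hq hk0, h.hecke1 hk1, h.hecke2 hq hk0 hk1 hk2 hk3, h.hecke3 hk3,
    h.prod hq hk0 hk1 hk2 hk3⟩

section Inverse

variable {V : Type*} [AddCommGroup V] [Module F V] {A : Module.End F V} {c : F}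

theorem mul_sub_of_sq (h : A * A = c • A - 1) : A * (c • 1 - A) = 1 := by
  rw [mul_sub, h, mul_smul_comm, mul_one, sub_sub_cancel]

theorem sub_mul_of_sq (h : A * A = c • A - 1) : (c • 1 - A) * A = 1 := by
  rw [sub_mul, h, smul_mul_assoc, one_mul, sub_sub_cancel]

theorem isUnit_of_sq (h : A * A = c • A - 1) : IsUnit A :=
  ⟨⟨A, c • 1 - A, mul_sub_of_sq h, sub_mul_of_sq h⟩, rfl⟩

end Inverse

namespace HeckeRel

variable {V : Type*} [AddCommGroup V] [Module F V] {q c0 c1 c2 c3 : F}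
  {T : ZMod 4 → Module.End F V}

theorem isUnit_y (h : HeckeRel q c0 c1 c2 c3 T) : IsUnit (T 0 * T 1) :=
  (isUnit_of_sq h.sq0).mul (isUnit_of_sq h.sq1)

theorem isUnit_x (h : HeckeRel q c0 c1 c2 c3 T) : IsUnit (T 3 * T 0) :=
  (isUnit_of_sq h.sq3).mul (isUnit_of_sq h.sq0)

theorem inverse_y (h : HeckeRel q c0 c1 c2 c3 T) :
    Ring.inverse (T 0 * T 1) = (c1 • 1 - T 1) * (c0 • 1 - T 0) := by
  refine left_inv_eq_right_inv (Ring.inverse_mul_cancel _ h.isUnit_y) ?_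
  rw [mul_assoc, ← mul_assoc (T 1), mul_sub_of_sq h.sq1, one_mul, mul_sub_of_sq h.sq0]

theorem t0_inverse_y (h : HeckeRel q c0 c1 c2 c3 T) :
    T 0 * Ring.inverse (T 0 * T 1) = c1 • 1 - c0 • (T 0 * T 1) + T 0 * T 1 * T 0 := by
  calc T 0 * Ring.inverse (T 0 * T 1)
      = c1 • (T 0 * (c0 • 1 - T 0)) - T 0 * T 1 * (c0 • 1 - T 0) := by
        rw [h.inverse_y, sub_mul, mul_sub, smul_mul_assoc, one_mul, mul_smul_comm, mul_assoc]
    _ = _ := by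
        rw [mul_sub_of_sq h.sq0, mul_sub, mul_smul_comm, mul_one]
        abel

theorem t0_y (h : HeckeRel q c0 c1 c2 c3 T) :
    T 0 * (T 0 * T 1) = Ring.inverse (T 0 * T 1) * T 0 - c1 • 1 + c0 • (T 0 * T 1) := by
  rw [h.inverse_y, mul_assoc _ _ (T 0), sub_mul_of_sq h.sq0, mul_one, ← mul_assoc, h.sq0,
    sub_mul, one_mul, smul_mul_assoc]
  abel

theorem t2_t3 (h : HeckeRel q c0 c1 c2 c3 T) :
    T 2 * T 3 = q⁻¹ • Ring.inverse (T 0 * T 1) := by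
  have h1 : Ring.inverse (T 0 * T 1) * (T 0 * T 1 * T 2 * T 3) = T 2 * T 3 := by
    rw [mul_assoc (T 0 * T 1), ← mul_assoc, Ring.inverse_mul_cancel _ h.isUnit_y, one_mul]
  rw [← h1, h.prod, mul_smul_comm, mul_one]

theorem t3_y (h : HeckeRel q c0 c1 c2 c3 T) :
    T 3 * (T 0 * T 1) = (q⁻¹ * c2) • 1 - (q⁻¹ * q⁻¹ * c3) • Ring.inverse (T 0 * T 1)
      + (q⁻¹ * q⁻¹) • (Ring.inverse (T 0 * T 1) * T 3) := by
  have h3 : T 3 = q⁻¹ • ((c2 • 1 - T 2) * Ring.inverse (T 0 * T 1)) := by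
    rw [← mul_smul_comm, ← h.t2_t3, ← mul_assoc, sub_mul_of_sq h.sq2, one_mul]
  have h2 : T 2 = q⁻¹ • (Ring.inverse (T 0 * T 1) * (c3 • 1 - T 3)) := by
    rw [← smul_mul_assoc, ← h.t2_t3, mul_assoc, mul_sub_of_sq h.sq3, mul_one]
  have h4 : T 3 * (T 0 * T 1) = q⁻¹ • (c2 • 1 - T 2) := by
    conv_lhs => rw [h3]
    rw [smul_mul_assoc, mul_assoc, Ring.inverse_mul_cancel _ h.isUnit_y, mul_one]
  rw [h4]
  conv_lhs => rw [h2]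
  rw [mul_sub, mul_smul_comm, mul_one]
  module

theorem t3_inverse_y (h : HeckeRel q c0 c1 c2 c3 T) (hq : q ≠ 0) :
    T 3 * Ring.inverse (T 0 * T 1) = (q * q) • (T 0 * T 1 * T 3) - (q * c2) • 1
      + c3 • Ring.inverse (T 0 * T 1) := by
  have h1 : T 0 * T 1 * T 3 = T 0 * T 1 * (T 3 * (T 0 * T 1)) * Ring.inverse (T 0 * T 1) := by
    rw [mul_assoc (T 0 * T 1), mul_assoc (T 3), Ring.mul_inverse_cancel _ h.isUnit_y, mul_one]
  have h2 := Ring.mul_inverse_cancel _ h.isUnit_y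
  rw [h1, h.t3_y]
  simp only [mul_add, mul_sub, mul_smul_comm, ← mul_assoc (T 0 * T 1), h2, add_mul, sub_mul,
    smul_mul_assoc, one_mul, mul_one]
  match_scalars <;> field_simp <;> ring

end HeckeRel

/-! ### Sequences generated from a cyclic vector by `Y` -/

/-- The sequence `u` is obtained from `u 0` by applying alternately the operators
`1 - a q^{2m} Y⁻¹` and `1 - a q^{2m+2} Y`. -/
structure YChain {V : Type*} [AddCommGroup V] [Module F V] (q a : F) (Y : Module.End F V)
    (u : ℕ → V) : Prop where
  odd : ∀ m : ℕ, u (2 * m + 1) = u (2 * m) - (a * q ^ (2 * m)) • Ring.inverse Y (u (2 * m))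
  even : ∀ m : ℕ, u (2 * m + 2) = u (2 * m + 1) - (a * q ^ (2 * m + 2)) • Y (u (2 * m + 1))

theorem IsChain.yChain {V : Type*} [AddCommGroup V] [Module F V] {q k0 k1 k2 k3 : F}
    {T : ZMod 4 → Module.End F V} {v : ℕ → V} (h : IsChain q k0 k1 k2 k3 T v) (hq : q ≠ 0)
    (hk0 : k0 ≠ 0) (hk1 : k1 ≠ 0) (hu : IsUnit (T 0 * T 1)) :
    YChain q (k0 * k1) (T 0 * T 1) v := by
  refine ⟨fun m => ?_, fun m => ?_⟩
  · have h1 := congrArg ⇑(Ring.inverse (T 0 * T 1) : Module.End F V) (h.y_even hq hk0 m)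
    have h2 : ∀ x, Ring.inverse (T 0 * T 1) (T 0 (T 1 x)) = x :=
      LinearMap.congr_fun (Ring.inverse_mul_cancel _ hu)
    rw [h2, map_smul] at h1
    rw [← h1, sub_sub_cancel]
  · rw [Module.End.mul_apply, h.y_odd]
    match_scalars <;> field_simp <;> ring

theorem yChain_wvec (q k0 k1 : F) (d : ℕ) (T : ZMod 4 → Module.End F (Fin (d + 1) → F)) :
    YChain q (k0 * k1⁻¹) (T 0 * T 1) (wvec q k0 k1 d T) := by
  refine ⟨fun m => ?_, fun m => ?_⟩
  · rw [wvec, if_pos (even_two_mul m), show 2 * ((2 * m + 1) / 2) = 2 * m by omega]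
    rfl
  · rw [wvec, if_neg (by simp), show 2 * ((2 * m + 1 + 1) / 2) = 2 * m + 2 by omega]
    rfl

namespace YChain

variable {V : Type*} [AddCommGroup V] [Module F V] {q a b : F} {Y : Module.End F V} {u w : ℕ → V}

theorem succ_eq_zero (h : YChain q a Y u) (i : ℕ) (hi : u i = 0) : u (i + 1) = 0 := by
  rcases Nat.even_or_odd' i with ⟨m, rfl | rfl⟩
  · simp [h.odd, hi]
  · simp [h.even, hi]

theorem eq_zero_of_le (h : YChain q a Y u) {i j : ℕ} (hij : i ≤ j) (hi : u i = 0) : u j = 0 := by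
  induction j, hij using Nat.le_induction with
  | base => exact hi
  | succ j _ ih => exact h.succ_eq_zero j ih

theorem y_even (h : YChain q a Y u) (hu : IsUnit Y) (m : ℕ) :
    Y (u (2 * m)) = Y (u (2 * m + 1)) + (a * q ^ (2 * m)) • u (2 * m) := by
  rw [h.odd, map_sub, map_smul, ← Module.End.mul_apply Y, Ring.mul_inverse_cancel _ hu,
    Module.End.one_apply, sub_add_cancel]

theorem eq_top_of_mem (h : YChain q a Y u) (hs : Submodule.span F (Set.range u) = ⊤)
    (W : Submodule F V) (h0 : u 0 ∈ W) (hY : ∀ x ∈ W, Y x ∈ W)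
    (hYi : ∀ x ∈ W, Ring.inverse Y x ∈ W) : W = ⊤ := by
  rw [eq_top_iff, ← hs, Submodule.span_le]
  rintro _ ⟨i, rfl⟩
  induction i with
  | zero => exact h0
  | succ i ih =>
    rcases Nat.even_or_odd' i with ⟨m, rfl | rfl⟩
    · rw [h.odd]
      exact W.sub_mem ih (W.smul_mem _ (hYi _ ih))
    · rw [h.even]
      exact W.sub_mem ih (W.smul_mem _ (hY _ ih))

open Polynomial in
theorem pow_apply (h : YChain q a Y u) (hu : IsUnit Y) (m : ℕ) :
    (Y ^ m) (u (2 * m)) = aeval Y (∏ j ∈ Finset.range m,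
      ((X - C (a * q ^ (2 * j))) * (1 - C (a * q ^ (2 * j + 2)) * X))) (u 0) := by
  induction m with
  | zero => simp
  | succ m ih =>
    rw [Finset.prod_range_succ, mul_comm (∏ j ∈ _, _), map_mul, Module.End.mul_apply, ← ih]
    have hY : Y * Ring.inverse Y = 1 := Ring.mul_inverse_cancel _ hu
    have hstep : Y (u (2 * (m + 1))) =
        aeval Y ((X - C (a * q ^ (2 * m))) * (1 - C (a * q ^ (2 * m + 2)) * X)) (u (2 * m)) := by
      have hY' : Y (Ring.inverse Y (u (2 * m))) = u (2 * m) := by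
        rw [← Module.End.mul_apply, hY, Module.End.one_apply]
      rw [mul_add, mul_one, h.even, h.odd]
      simp only [map_mul, map_sub, aeval_X, aeval_C, map_one, Module.End.mul_apply,
        LinearMap.sub_apply, Module.algebraMap_end_apply, Module.End.one_apply, map_smul, hY']
      module
    rw [pow_succ, Module.End.mul_apply, hstep, ← aeval_X_pow (R := F) Y, ← Module.End.mul_apply,
      ← Module.End.mul_apply, ← map_mul, ← map_mul, mul_comm]

open Polynomial in
/-- Up to a nonzero constant, the polynomial producing `u (2n)` is symmetric in `a` and `b` when
`a b q^{2n} = 1`: the factor `1 - a q^{2j+2} Y` has the same root as `Y - b q^{2(n-1-j)}`. -/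
theorem prod_eq {n : ℕ} (hab : a * b * q ^ (2 * n) = 1) :
    ∏ j ∈ Finset.range n, ((X - C (a * q ^ (2 * j))) * (1 - C (a * q ^ (2 * j + 2)) * X)) =
      C (∏ j ∈ Finset.range n, (-(a * q ^ (2 * j + 2)))) *
        ((∏ j ∈ Finset.range n, (X - C (a * q ^ (2 * j)))) *
          ∏ j ∈ Finset.range n, (X - C (b * q ^ (2 * j)))) := by
  rw [← Finset.prod_range_reflect (fun j => (X - C (b * q ^ (2 * j)) : F[X])), map_prod,
    Finset.prod_mul_distrib, mul_left_comm]
  congr 1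
  rw [← Finset.prod_mul_distrib]
  refine Finset.prod_congr rfl fun j hj => ?_
  have hj := Finset.mem_range.1 hj
  have h1 : a * q ^ (2 * j + 2) * (b * q ^ (2 * (n - 1 - j))) = 1 := by
    rw [← hab, show 2 * n = (2 * j + 2) + 2 * (n - 1 - j) by omega, pow_add]
    ring
  have h2 : (1 : F[X]) = C (a * q ^ (2 * j + 2)) * C (b * q ^ (2 * (n - 1 - j))) := by
    rw [← C_mul, h1, C_1]
  rw [h2, C_neg]
  ring

/-- For two sequences with the same initial vector and with `a b q^{2n} = 1`, vanishing of one at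
step `2n` forces vanishing of the other. -/
theorem eq_zero_of_eq_zero (h : YChain q a Y u) (h' : YChain q b Y w) (hu : IsUnit Y)
    (h0 : w 0 = u 0) {n : ℕ} (hab : a * b * q ^ (2 * n) = 1) (hz : u (2 * n) = 0)
    (ha : a ≠ 0) (hq : q ≠ 0) : w (2 * n) = 0 := by
  have e1 := h.pow_apply hu n
  have e2 := h'.pow_apply hu n
  rw [prod_eq hab, hz, map_zero, map_mul, Module.End.mul_apply, Polynomial.aeval_C,
    Module.algebraMap_end_apply] at e1
  have hK : (∏ j ∈ Finset.range n, (-(a * q ^ (2 * j + 2)))) ≠ 0 :=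
    Finset.prod_ne_zero_iff.2 fun j _ => neg_ne_zero.2 (mul_ne_zero ha (pow_ne_zero _ hq))
  have e3 := (smul_eq_zero.1 e1.symm).resolve_left hK
  rw [prod_eq (show b * a * q ^ (2 * n) = 1 by rw [← hab]; ring), h0, map_mul,
    Module.End.mul_apply, mul_comm (∏ j ∈ Finset.range n, (Polynomial.X - Polynomial.C (b * q ^ (2 * j)))), e3, map_zero] at e2
  exact ((Module.End.isUnit_iff _).1 (hu.pow n)).1 (e2.trans (map_zero _).symm)

end YChain

/-! ### The intertwining operator -/

section Intertwine

variable {V V' : Type*} [AddCommGroup V] [Module F V] [AddCommGroup V'] [Module F V']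

theorem intertwine_inverse {Y : Module.End F V} {Y' : Module.End F V'} {R : V' →ₗ[F] V}
    (hu : IsUnit Y) (hu' : IsUnit Y') {x : V'}
    (h : R (Y' (Ring.inverse Y' x)) = Y (R (Ring.inverse Y' x))) :
    R (Ring.inverse Y' x) = Ring.inverse Y (R x) := by
  rw [← Module.End.mul_apply, Ring.mul_inverse_cancel _ hu', Module.End.one_apply] at h
  rw [h, ← Module.End.mul_apply, Ring.inverse_mul_cancel _ hu, Module.End.one_apply]

/-- A linear map carrying one `Y`-sequence to another intertwines the two operators `Y`. -/
theorem YChain.intertwine {q a : F} {Y : Module.End F V} {Y' : Module.End F V'} {w : ℕ → V}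
    {u : ℕ → V'} {R : V' →ₗ[F] V} (hw : YChain q a Y w) (hu : YChain q a Y' u)
    (hY : IsUnit Y) (hY' : IsUnit Y') (hq : q ≠ 0) (ha : a ≠ 0)
    (hs : Submodule.span F (Set.range u) = ⊤) (hR : ∀ i, R (u i) = w i) (x : V') :
    R (Y' x) = Y (R x) := by
  have hodd : ∀ m, R (Y' (u (2 * m + 1))) = Y (R (u (2 * m + 1))) := by
    intro m
    have hc : a * q ^ (2 * m + 2) ≠ 0 := mul_ne_zero ha (pow_ne_zero _ hq)
    have e1 := congrArg R (hu.even m)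
    rw [map_sub, map_smul, hR, hR, hw.even, sub_right_inj] at e1
    rw [hR]
    exact (smul_right_injective V hc e1).symm
  refine LinearMap.congr_fun (f := R ∘ₗ Y') (g := Y ∘ₗ R) (LinearMap.ext_on_range hs fun i => ?_) x
  simp only [LinearMap.comp_apply]
  rcases Nat.even_or_odd' i with ⟨m, rfl | rfl⟩
  -- On an even vector only `Y⁻¹` is given by the recursion; apply `Y` to that relation.
  · rw [hu.y_even hY', map_add, hodd, map_smul, hR, hR, hw.y_even hY]
  · exact hodd m

/-- If `R` intertwines `Y = T₀ T₁` and sends a joint eigenvector of `T₀`, `T₃` that is cyclic for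
`Y` to a joint eigenvector with the same eigenvalues, then `R` intertwines all four generators:
the relations of `H_q` express `T₀ Y^{±1}` as a combination of `Y^{∓1} T₀`, `Y` and `1`, and
`T₃ Y^{±1}` as a combination of `Y^{∓1} T₃`, `Y⁻¹` and `1`. -/
theorem HeckeRel.intertwine {q c0 c1 c2 c3 a k0 k3 : F} {T : ZMod 4 → Module.End F V}
    {T' : ZMod 4 → Module.End F V'} {u : ℕ → V'} {R : V' →ₗ[F] V}
    (h : HeckeRel q c0 c1 c2 c3 T) (h' : HeckeRel q c0 c1 c2 c3 T') (hq : q ≠ 0)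
    (hu : YChain q a (T' 0 * T' 1) u) (hs : Submodule.span F (Set.range u) = ⊤)
    (hR : ∀ x, R ((T' 0 * T' 1) x) = (T 0 * T 1) (R x))
    (h0 : T 0 (R (u 0)) = k0 • R (u 0)) (h0' : T' 0 (u 0) = k0 • u 0)
    (h3 : T 3 (R (u 0)) = k3 • R (u 0)) (h3' : T' 3 (u 0) = k3 • u 0)
    (i : ZMod 4) (x : V') : R (T' i x) = T i (R x) := by
  have hRi : ∀ x, R (Ring.inverse (T' 0 * T' 1) x) = Ring.inverse (T 0 * T 1) (R x) :=
    fun x => intertwine_inverse h.isUnit_y h'.isUnit_y (hR _)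
  have hT0 : ∀ x, R (T' 0 x) = T 0 (R x) := by
    have htop := hu.eq_top_of_mem hs (LinearMap.eqLocus (R ∘ₗ T' 0) (T 0 ∘ₗ R))
      (by simp [LinearMap.mem_eqLocus, h0, h0'])
      (fun x hx => by
        simp only [LinearMap.mem_eqLocus, LinearMap.comp_apply] at hx ⊢
        rw [hR, ← Module.End.mul_apply (T' 0), ← Module.End.mul_apply (T 0), h.t0_y, h'.t0_y]
        simp only [LinearMap.add_apply, LinearMap.sub_apply, LinearMap.smul_apply,
          Module.End.one_apply, map_add, map_sub, map_smul, hR, hx,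
          Module.End.mul_apply (Ring.inverse _), hRi])
      (fun x hx => by
        simp only [LinearMap.mem_eqLocus, LinearMap.comp_apply] at hx ⊢
        rw [hRi, ← Module.End.mul_apply (T' 0), ← Module.End.mul_apply (T 0), h.t0_inverse_y,
          h'.t0_inverse_y]
        simp only [LinearMap.add_apply, LinearMap.sub_apply, LinearMap.smul_apply,
          Module.End.one_apply, map_add, map_sub, map_smul, hR,
          Module.End.mul_apply (T' 0 * T' 1), Module.End.mul_apply (T 0 * T 1), hx])
    intro x
    have hx : x ∈ LinearMap.eqLocus (R ∘ₗ T' 0) (T 0 ∘ₗ R) := htop ▸ Submodule.mem_top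
    exact hx
  have hT3 : ∀ x, R (T' 3 x) = T 3 (R x) := by
    have htop := hu.eq_top_of_mem hs (LinearMap.eqLocus (R ∘ₗ T' 3) (T 3 ∘ₗ R))
      (by simp [LinearMap.mem_eqLocus, h3, h3'])
      (fun x hx => by
        simp only [LinearMap.mem_eqLocus, LinearMap.comp_apply] at hx ⊢
        rw [hR, ← Module.End.mul_apply (T' 3), ← Module.End.mul_apply (T 3), h.t3_y, h'.t3_y]
        simp only [LinearMap.add_apply, LinearMap.sub_apply, LinearMap.smul_apply,
          Module.End.one_apply, map_add, map_sub, map_smul, hx,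
          Module.End.mul_apply (Ring.inverse _), hRi])
      (fun x hx => by
        simp only [LinearMap.mem_eqLocus, LinearMap.comp_apply] at hx ⊢
        rw [hRi, ← Module.End.mul_apply (T' 3), ← Module.End.mul_apply (T 3),
          h.t3_inverse_y hq, h'.t3_inverse_y hq]
        simp only [LinearMap.add_apply, LinearMap.sub_apply, LinearMap.smul_apply,
          Module.End.one_apply, map_add, map_sub, map_smul, hRi, hR,
          Module.End.mul_apply (T' 0 * T' 1), Module.End.mul_apply (T 0 * T 1), hx])
    intro x
    have hx : x ∈ LinearMap.eqLocus (R ∘ₗ T' 3) (T 3 ∘ₗ R) := htop ▸ Submodule.mem_top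
    exact hx
  have hi : ∀ i : ZMod 4, i = 0 ∨ i = 1 ∨ i = 2 ∨ i = 3 := by decide
  rcases hi i with rfl | rfl | rfl | rfl
  · exact hT0 x
  -- `T₁ = T₀⁻¹ Y`
  · refine ((Module.End.isUnit_iff _).1 (isUnit_of_sq h.sq0)).1 ?_
    rw [← hT0]
    exact hR x
  -- `T₂ = q⁻¹ Y⁻¹ T₃⁻¹`
  · obtain ⟨y, rfl⟩ := ((Module.End.isUnit_iff _).1 (isUnit_of_sq h'.sq3)).2 x
    rw [hT3, ← Module.End.mul_apply (T' 2), ← Module.End.mul_apply (T 2), h.t2_t3, h'.t2_t3,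
      LinearMap.smul_apply, LinearMap.smul_apply, map_smul, hRi]
  · exact hT3 x

end Intertwine

/-- The intertwiner from `E(k₀,k₁⁻¹,k₂,k₃)` to `E(k₀,k₁,k₂,k₃)`; it sends the standard basis to the
vectors `w_i`. -/
theorem exists_intertwiner {q k0 k1 k2 k3 : F} {d : ℕ}
    {T Ta : ZMod 4 → Module.End F (Fin (d + 1) → F)}
    (hq : q ≠ 0) (hodd : Odd d) (hk0 : k0 ≠ 0) (hk1 : k1 ≠ 0) (hk2 : k2 ≠ 0) (hk3 : k3 ≠ 0)
    (hpar : k0 ^ 2 = (q ^ (d + 1))⁻¹)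
    (hT : IsE q k0 k1 k2 k3 d T) (hTa : IsE q k0 k1⁻¹ k2 k3 d Ta) :
    ∃ R : (Fin (d + 1) → F) →ₗ[F] (Fin (d + 1) → F),
      (∀ i x, R (Ta i x) = T i (R x)) ∧ (∀ i, R (e F d i) = wvec q k0 k1 d T i) := by
  have hC := hT.isChain hq hodd hk0 hpar
  have hCa := hTa.isChain hq hodd hk0 hpar
  have hH := hC.heckeRel hq hk0 hk1 hk2 hk3
  have hHa := hCa.heckeRel hq hk0 (inv_ne_zero hk1) hk2 hk3
  rw [inv_inv, add_comm k1⁻¹] at hHa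
  have hY := hC.yChain hq hk0 hk1 hH.isUnit_y
  have hYa := hCa.yChain hq hk0 (inv_ne_zero hk1) hHa.isUnit_y
  have hW := yChain_wvec q k0 k1 d T
  have hz : wvec q k0 k1 d T (d + 1) = 0 := by
    obtain ⟨n, rfl⟩ := hodd
    refine hY.eq_zero_of_eq_zero hW hH.isUnit_y rfl (n := n + 1) ?_
      (e_eq_zero _ _ (by omega)) (mul_ne_zero hk0 hk1) hq
    rw [show 2 * (n + 1) = 2 * n + 1 + 1 by ring,
      show k0 * k1 * (k0 * k1⁻¹) = k0 ^ 2 by field_simp, hpar,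
      inv_mul_cancel₀ (pow_ne_zero _ hq)]
  let R := (Pi.basisFun F (Fin (d + 1))).constr F (fun i => wvec q k0 k1 d T i)
  have hR : ∀ i, R (e F d i) = wvec q k0 k1 d T i := by
    intro i
    rcases le_or_gt i d with hi | hi
    · have h1 := (Pi.basisFun F (Fin (d + 1))).constr_basis F
        (fun i => wvec q k0 k1 d T i) ⟨i, by omega⟩
      rwa [Pi.basisFun_apply, ← e_eq_single] at h1
    · rw [e_eq_zero d i hi, map_zero, hW.eq_zero_of_le hi hz]
  refine ⟨R, ?_, hR⟩
  refine hH.intertwine hHa hq hYa hCa.span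
    (hW.intertwine hYa hH.isUnit_y hHa.isUnit_y hq (mul_ne_zero hk0 (inv_ne_zero hk1)) hCa.span hR)
    (k0 := k0) (k3 := k3) ?_ hCa.t0_zero ?_ hCa.t3_zero
  · rw [hR]
    exact hC.t0_zero
  · rw [hR]
    exact hC.t3_zero

/-- The composite of the intertwiners `E(k₁) → E(k₁⁻¹) → E(k₁)` is the identity, as it commutes
with `Y` and fixes the cyclic vector `v_0`. -/
theorem comp_eq_id {q k0 k1 k2 k3 : F} {d : ℕ}
    {T Ta : ZMod 4 → Module.End F (Fin (d + 1) → F)}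
    (hq : q ≠ 0) (hodd : Odd d) (hk0 : k0 ≠ 0) (hk1 : k1 ≠ 0) (hk2 : k2 ≠ 0) (hk3 : k3 ≠ 0)
    (hpar : k0 ^ 2 = (q ^ (d + 1))⁻¹) (hT : IsE q k0 k1 k2 k3 d T)
    {R S : (Fin (d + 1) → F) →ₗ[F] (Fin (d + 1) → F)}
    (hR : ∀ i x, R (Ta i x) = T i (R x)) (hS : ∀ i x, S (T i x) = Ta i (S x))
    (hR0 : R (e F d 0) = e F d 0) (hS0 : S (e F d 0) = e F d 0) (x : Fin (d + 1) → F) :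
    R (S x) = x := by
  have hC := hT.isChain hq hodd hk0 hpar
  have hH := hC.heckeRel hq hk0 hk1 hk2 hk3
  have hcomm : ∀ x, (R ∘ₗ S) ((T 0 * T 1) x) = (T 0 * T 1) ((R ∘ₗ S) x) := by
    intro x
    simp only [LinearMap.comp_apply, Module.End.mul_apply, hS, hR]
  have htop := (hC.yChain hq hk0 hk1 hH.isUnit_y).eq_top_of_mem hC.span
    (LinearMap.eqLocus (R ∘ₗ S) LinearMap.id)
    (by simp [LinearMap.mem_eqLocus, hR0, hS0])
    (fun x hx => by
      rw [LinearMap.mem_eqLocus, LinearMap.id_apply] at hx ⊢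
      rw [hcomm, hx])
    (fun x hx => by
      rw [LinearMap.mem_eqLocus, LinearMap.id_apply] at hx ⊢
      rw [intertwine_inverse hH.isUnit_y hH.isUnit_y (hcomm _), hx])
  have hx : x ∈ LinearMap.eqLocus (R ∘ₗ S) LinearMap.id := htop ▸ Submodule.mem_top
  exact hx

/-- The action of `X = T₃ T₀` on the standard basis of `E(k₀,k₁,k₂,k₃)`. -/
theorem IsChain.x_apply {V : Type*} [AddCommGroup V] [Module F V] {q k0 k1 k2 k3 : F}
    {T : ZMod 4 → Module.End F V} {v : ℕ → V} (h : IsChain q k0 k1 k2 k3 T v) (hq : q ≠ 0)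
    (hk0 : k0 ≠ 0) (hk3 : k3 ≠ 0) (hu : IsUnit (T 3 * T 0)) (i : ℕ) :
    ((1 : Module.End F V) - (k0 * k3 * q ^ (2 * ((i + 1) / 2))) •
        (if Even i then Ring.inverse (T 3 * T 0) else T 3 * T 0)) (v i)
      = if i = 0 then 0 else
          (if Even i then (1 - q ^ i) * (1 - k0 ^ 2 * q ^ i)
           else (k0 * k1 * k3 * q ^ i - k2) * (k0 * k1 * k3 * q ^ i - k2⁻¹)) • v (i - 1) := by
  have hinv : ∀ (c : F) (x y : V), T 3 (T 0 (x - y)) = c • x →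
      ((1 : Module.End F V) - c • Ring.inverse (T 3 * T 0)) x = y := by
    intro c x y hxy
    have h1 := congrArg ⇑(Ring.inverse (T 3 * T 0) : Module.End F V) hxy
    have h2 : ∀ x, Ring.inverse (T 3 * T 0) (T 3 (T 0 x)) = x :=
      LinearMap.congr_fun (Ring.inverse_mul_cancel _ hu)
    rw [h2, map_smul] at h1
    rw [LinearMap.sub_apply, LinearMap.smul_apply, Module.End.one_apply, ← h1, sub_sub_cancel]
  rcases Nat.even_or_odd' i with ⟨m, rfl | rfl⟩
  · rw [if_pos (even_two_mul m), if_pos (even_two_mul m),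
      show 2 * ((2 * m + 1) / 2) = 2 * m by omega]
    refine hinv _ _ _ ?_
    rcases m with _ | m
    · simp only [mul_zero, if_true, pow_zero, sub_zero, h.t0_zero, map_smul, h.t3_zero]
      module
    · rw [if_neg (Nat.mul_ne_zero two_ne_zero m.succ_ne_zero)]
      simp only [mul_add, mul_one, Nat.add_succ_sub_one, map_sub, map_smul, map_add, h.t0_even,
        h.t0_odd, h.t3_even', h.t3_odd]
      match_scalars <;> field_simp <;> ring
  · have hodd : ¬ Even (2 * m + 1) := by simp
    rw [if_neg hodd, if_neg hodd, if_neg (Nat.succ_ne_zero _),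
      show 2 * ((2 * m + 1 + 1) / 2) = 2 * m + 2 by omega, Nat.add_sub_cancel]
    simp only [LinearMap.sub_apply, LinearMap.smul_apply, Module.End.one_apply,
      Module.End.mul_apply, h.t0_odd, map_sub, map_smul, h.t3_odd, h.t3_even']
    match_scalars <;> field_simp <;> ring

/-! ### The theorem -/

/-- `E(k₀,k₁,k₂,k₃) ≅ E(k₀,k₁⁻¹,k₂,k₃)` without irreducibility;
the vectors `w_0,…,w_d` form a basis and satisfy the stated `X`- and `Y`-relations,
where `X = T₃ T₀`, `Y = T₀ T₁`. -/
theorem statement12 (q : F) (hq : q ≠ 0) (d : ℕ) (hd : 1 ≤ d) (hodd : Odd d)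
    (k0 k1 k2 k3 : F) (hk0 : k0 ≠ 0) (hk1 : k1 ≠ 0) (hk2 : k2 ≠ 0) (hk3 : k3 ≠ 0)
    (hpar : k0 ^ 2 = (q ^ (d + 1))⁻¹)
    (T Ta : ZMod 4 → Module.End F (Fin (d + 1) → F))
    (hT : IsE q k0 k1 k2 k3 d T) (hTa : IsE q k0 k1⁻¹ k2 k3 d Ta) :
    Iso T Ta ∧
    LinearIndependent F (fun i : Fin (d + 1) => wvec q k0 k1 d T i.val) ∧
    Submodule.span F (Set.range fun i : Fin (d + 1) => wvec q k0 k1 d T i.val) = ⊤ ∧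
    (∀ i : ℕ, i ≤ d →
      ((1 : Module.End F (Fin (d + 1) → F)) -
        (k0 * k3 * q ^ (2 * ((i + 1) / 2))) •
          (if Even i then Ring.inverse (T 3 * T 0) else T 3 * T 0))
        (wvec q k0 k1 d T i)
      = if i = 0 then 0 else
          (if Even i then (1 - q ^ i) * (1 - k0 ^ 2 * q ^ i)
           else (k0 * k1⁻¹ * k3 * q ^ i - k2) * (k0 * k1⁻¹ * k3 * q ^ i - k2⁻¹)) •
            wvec q k0 k1 d T (i - 1)) ∧
    (∀ i : ℕ, i ≤ d →
      ((1 : Module.End F (Fin (d + 1) → F)) -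
        (k0 * k1⁻¹ * q ^ (2 * ((i + 1) / 2))) •
          (if Even i then Ring.inverse (T 0 * T 1) else T 0 * T 1))
        (wvec q k0 k1 d T i)
      = if i = d then 0 else wvec q k0 k1 d T (i + 1)) := by
  obtain ⟨R, hR, hRw⟩ := exists_intertwiner hq hodd hk0 hk1 hk2 hk3 hpar hT hTa
  obtain ⟨S, hS, hSw⟩ := exists_intertwiner (k1 := k1⁻¹) (T := Ta) (Ta := T) hq hodd hk0
    (inv_ne_zero hk1) hk2 hk3 hpar hTa (by rwa [inv_inv])
  have hRS := comp_eq_id hq hodd hk0 hk1 hk2 hk3 hpar hT hR hS (hRw 0) (hSw 0)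
  have hSR := comp_eq_id hq hodd hk0 (inv_ne_zero hk1) hk2 hk3 hpar hTa hS hR (hSw 0) (hRw 0)
  have hRid : R ∘ₗ S = LinearMap.id := LinearMap.ext hRS
  have hSid : S ∘ₗ R = LinearMap.id := LinearMap.ext hSR
  let E : (Fin (d + 1) → F) ≃ₗ[F] (Fin (d + 1) → F) := LinearEquiv.ofLinearMap R S hRid hSid
  have hC := hT.isChain hq hodd hk0 hpar
  have hCa := hTa.isChain hq hodd hk0 hpar
  have hH := hC.heckeRel hq hk0 hk1 hk2 hk3
  have hHa := hCa.heckeRel hq hk0 (inv_ne_zero hk1) hk2 hk3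
  have hb : (fun i : Fin (d + 1) => wvec q k0 k1 d T i.val) =
      ((Pi.basisFun F (Fin (d + 1))).map E : Fin (d + 1) → Fin (d + 1) → F) := by
    funext i
    rw [Module.Basis.map_apply, Pi.basisFun_apply, ← e_eq_single]
    exact (hRw i).symm
  refine ⟨⟨E.symm, hS⟩, ?_, ?_, fun i _ => ?_, fun i _ => ?_⟩
  · rw [hb]
    exact Module.Basis.linearIndependent _
  · rw [hb]
    exact Module.Basis.span_eq _
  · have hX : ∀ x, R ((Ta 3 * Ta 0) x) = (T 3 * T 0) (R x) := by
      intro x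
      simp only [Module.End.mul_apply, hR]
    have hXi : ∀ x, R (Ring.inverse (Ta 3 * Ta 0) x) = Ring.inverse (T 3 * T 0) (R x) :=
      fun x => intertwine_inverse hH.isUnit_x hHa.isUnit_x (hX _)
    have h1 := congrArg R (hCa.x_apply hq hk0 hk3 hHa.isUnit_x i)
    rw [apply_ite R, map_zero, map_smul, hRw] at h1
    rw [← h1, ← hRw]
    split_ifs <;>
      simp only [LinearMap.sub_apply, LinearMap.smul_apply, Module.End.one_apply, map_sub,
        map_smul, hX, hXi]
  · by_cases hi : i = d
    -- The left-hand side is the recursive definition of `w_{i+1}`, and `w_{d+1} = R v_{d+1} = 0`.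
    · rw [if_pos hi]
      subst hi
      change wvec q k0 k1 i T (i + 1) = 0
      rw [← hRw, e_eq_zero i (i + 1) (by omega), map_zero]
    · rw [if_neg hi]
      rfl

end DAHA
end
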